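/- Let H be a 3-uniform 3-partite hypergraph with edge ideal I = I(H). Then I^(2) = I^2 + (∏_{x∈V(B)} x : B is a bad subhypergraph of length 3 in H). -/

import Mathlib

open MvPolynomial

noncomputable def symbolicPower {R : Type*} [CommRing R] (I : Ideal R) (n : ℕ) : Ideal R :=
  sInf { J : Ideal R | ∃ (p : Ideal R) (hp : p.IsPrime),
    p ∈ associatedPrimes R (R ⧸ I) ∧
    J = Ideal.comap (algebraMap R (Localization (@Ideal.primeCompl R _ p hp)))
        (Ideal.map (algebraMap R (Localization (@Ideal.primeCompl R _ p hp))) (I ^ n)) }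

noncomputable def edgeIdeal (k : Type*) {V : Type*} [CommRing k] [DecidableEq V]
    (E : Finset (Finset V)) : Ideal (MvPolynomial V k) :=
  Ideal.span ((fun e : Finset V => ∏ x ∈ e, (X x : MvPolynomial V k)) '' ↑E)

/-- three hyperedges forming a bad subhypergraph of length 3: pairwise distinct,
pairwise intersecting in exactly one vertex, with the three intersection vertices
pairwise distinct. -/
def BadTriple {V : Type*} [DecidableEq V] (E : Finset (Finset V))
    (e₁ e₂ e₃ : Finset V) : Prop :=
  e₁ ∈ E ∧ e₂ ∈ E ∧ e₃ ∈ E ∧ e₁ ≠ e₂ ∧ e₂ ≠ e₃ ∧ e₁ ≠ e₃ ∧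
  (e₁ ∩ e₂).card = 1 ∧ (e₂ ∩ e₃).card = 1 ∧ (e₁ ∩ e₃).card = 1 ∧
  e₁ ∩ e₂ ≠ e₂ ∩ e₃ ∧ e₂ ∩ e₃ ≠ e₁ ∩ e₃ ∧ e₁ ∩ e₂ ≠ e₁ ∩ e₃

/-!
For a radical ideal every associated prime of the quotient has the form `I : s`. For an edge ideal
`I` these are the ideals generated by the minimal vertex covers, and the order of vanishing along
such a prime is a weighted order, which is additive. Hence a monomial `m` lies in `I^(n)` iff every
vertex cover has weight at least `n` with respect to the exponents of `m`.

Take `n = 2` and consider the edges contained in the support of `m`. Enlarging a single vertex of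
exponent one by the complement of the support cannot give a cover of weight one, so no vertex of
exponent one lies on all these edges. If no product of two edges divides `m`, then any two of them
share a vertex of exponent one. Coloring each vertex by its part forces two of the edges to share
exactly one such vertex, and a third edge avoiding that vertex completes a bad subhypergraph.
-/

section SymbolicPower

variable {R : Type*} [CommRing R] {I : Ideal R} {n : ℕ}

theorem mem_symbolicPower_iff {f : R} :
    f ∈ symbolicPower I n ↔ ∀ p ∈ associatedPrimes R (R ⧸ I), ∃ s ∉ p, s * f ∈ I ^ n := by
  simp only [symbolicPower, Submodule.mem_sInf, Set.mem_ofPred_eq]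
  constructor
  · intro h p hp
    have hprime : p.IsPrime := hp.isPrime
    have hmem := h _ ⟨p, hprime, hp, rfl⟩
    rwa [Ideal.mem_comap,
      IsLocalization.algebraMap_mem_map_algebraMap_iff p.primeCompl] at hmem
  · rintro h _ ⟨p, hprime, hp, rfl⟩
    rw [Ideal.mem_comap, IsLocalization.algebraMap_mem_map_algebraMap_iff p.primeCompl]
    exact h p hp

theorem pow_le_symbolicPower (I : Ideal R) (n : ℕ) : I ^ n ≤ symbolicPower I n := fun f hf =>
  mem_symbolicPower_iff.2 fun _ hp => ⟨1, hp.isPrime.one_notMem, by rwa [one_mul]⟩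

theorem bot_colon_singleton_mk (I : Ideal R) (s : R) :
    (⊥ : Submodule R (R ⧸ I)).colon {Ideal.Quotient.mk I s} = I.colon {s} := by
  ext g
  rw [Submodule.mem_colon_singleton, Submodule.mem_colon_singleton, Submodule.mem_bot,
    Algebra.smul_def, Ideal.Quotient.algebraMap_eq, ← map_mul, Ideal.Quotient.eq_zero_iff_mem,
    smul_eq_mul]

theorem isRadical_colon_singleton (hI : I.IsRadical) (s : R) : (I.colon {s}).IsRadical := by
  rintro g ⟨j, hg⟩
  rw [Submodule.mem_colon_singleton, smul_eq_mul] at hg ⊢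
  refine hI ⟨j + 1, ?_⟩
  have hpow : (g * s) ^ (j + 1) = g * s ^ j * (g ^ j * s) := by ring
  rw [hpow]
  exact I.mul_mem_left _ hg

theorem mem_associatedPrimes_quotient_iff (hI : I.IsRadical) {p : Ideal R} :
    p ∈ associatedPrimes R (R ⧸ I) ↔ p.IsPrime ∧ ∃ s, p = I.colon {s} := by
  simp only [AssociatedPrimes.mem_iff, IsAssociatedPrime, Submodule.isAssociatedPrime_def,
    Ideal.Quotient.mk_surjective.exists, bot_colon_singleton_mk,
    (isRadical_colon_singleton hI _).radical]

theorem mem_symbolicPower_of_forall_mem_pow (hI : I.IsRadical) {f : R}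
    (h : ∀ p ∈ associatedPrimes R (R ⧸ I), f ∈ p ^ n) : f ∈ symbolicPower I n := by
  refine mem_symbolicPower_iff.2 fun p hp => ?_
  obtain ⟨hprime, s, hps⟩ := (mem_associatedPrimes_quotient_iff hI).1 hp
  have mem_iff {g : R} : g ∈ p ↔ g * s ∈ I := by
    rw [hps, Submodule.mem_colon_singleton, smul_eq_mul]
  have hs : s ∉ p := fun hsp => hprime.one_notMem <| mem_iff.2 <| by
    rw [one_mul]
    exact hI ⟨2, pow_two s ▸ mem_iff.1 hsp⟩
  have hle : Ideal.span {s} * p ≤ I :=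
    Ideal.span_singleton_mul_le_iff.2 fun g hg => mul_comm g s ▸ mem_iff.1 hg
  refine ⟨s ^ n, fun hmem => hs (hprime.mem_of_pow_mem n hmem), Ideal.pow_right_mono hle n ?_⟩
  rw [mul_pow]
  exact Ideal.mul_mem_mul (Ideal.pow_mem_pow (Ideal.mem_span_singleton_self s) n) (h p hp)

end SymbolicPower

section VariableIdeals

variable {σ R : Type*}

/-- The ideal generated by the variables in `C`. Its powers measure the order of vanishing along the
coordinate subspace cut out by these variables. -/
noncomputable def idealOfVarsIn (R : Type*) [CommSemiring R] (C : Finset σ) :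
    Ideal (MvPolynomial σ R) :=
  Ideal.span (X '' (C : Set σ))

theorem weight_indicator_one (C : Finset σ) (m : σ →₀ ℕ) :
    Finsupp.weight (Set.indicator C 1) m = ∑ v ∈ C, m v := by
  classical
  simp only [Finsupp.weight_apply, Finsupp.sum, Set.indicator_apply, SetLike.mem_coe,
    Pi.one_apply, smul_eq_mul, mul_ite, mul_one, mul_zero]
  rw [← Finset.sum_filter, Finset.filter_mem_eq_inter, Finset.inter_comm,
    ← Finset.filter_mem_eq_inter]
  exact Finset.sum_filter_of_ne fun v _ => Finsupp.mem_support_iff.2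

variable [CommSemiring R] {C : Finset σ} {f : MvPolynomial σ R} {n : ℕ}

theorem le_weightedOrder_coe_iff :
    n ≤ (f : MvPowerSeries σ R).weightedOrder (Set.indicator C 1) ↔
      ∀ m ∈ f.support, n ≤ ∑ v ∈ C, m v := by
  simp only [← weight_indicator_one]
  constructor
  · intro h m hm
    rw [mem_support_iff, ← coeff_coe] at hm
    exact_mod_cast h.trans (MvPowerSeries.weightedOrder_le _ hm)
  · intro h
    refine MvPowerSeries.nat_le_weightedOrder _ fun m hm => ?_
    rw [coeff_coe]
    exact notMem_support_iff.1 fun hmem => (h m hmem).not_gt hm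

theorem mem_idealOfVarsIn_iff :
    f ∈ idealOfVarsIn R C ↔ ∀ m ∈ f.support, 1 ≤ ∑ v ∈ C, m v := by
  simp only [idealOfVarsIn, mem_ideal_span_X_image, SetLike.mem_coe, Nat.one_le_iff_ne_zero, ne_eq,
    Finset.sum_eq_zero_iff, not_forall, exists_prop]

theorem monomial_mem_idealOfVarsIn_pow {m : σ →₀ ℕ} (a : R) (h : n ≤ ∑ v ∈ C, m v) :
    monomial m a ∈ idealOfVarsIn R C ^ n := by
  classical
  induction n generalizing m with
  | zero => simp
  | succ n ih =>
    obtain ⟨v, hv, hmv⟩ := Finset.exists_ne_zero_of_sum_ne_zero (Nat.ne_zero_of_lt h)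
    obtain ⟨d, rfl⟩ := exists_add_of_le (Finsupp.single_le_iff.2 (Nat.one_le_iff_ne_zero.2 hmv))
    have hd : n ≤ ∑ w ∈ C, d w := by
      simpa [Finset.sum_add_distrib, Finsupp.single_apply, hv, add_comm 1] using h
    rw [← one_mul a, ← monomial_mul, pow_succ']
    exact Ideal.mul_mem_mul (Ideal.subset_span ⟨v, hv, rfl⟩) (ih hd)

theorem mem_idealOfVarsIn_pow_iff :
    f ∈ idealOfVarsIn R C ^ n ↔ ∀ m ∈ f.support, n ≤ ∑ v ∈ C, m v := by
  constructor
  · rw [← le_weightedOrder_coe_iff]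
    intro hf
    induction hf using Submodule.pow_induction_on_left' with
    | algebraMap r => simp
    | add p q i _ _ hp hq =>
      rw [coe_add]
      exact (le_min hp hq).trans (MvPowerSeries.min_weightedOrder_le_add _)
    | mem_mul p hp i q _ hq =>
      have hp' := le_weightedOrder_coe_iff.2 (mem_idealOfVarsIn_iff.1 hp)
      rw [coe_mul, Nat.succ_eq_one_add, Nat.cast_add]
      exact (add_le_add hp' hq).trans (MvPowerSeries.le_weightedOrder_mul _)
  · intro h
    rw [f.as_sum]
    exact Ideal.sum_mem _ fun m hm => monomial_mem_idealOfVarsIn_pow _ (h m hm)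

theorem mem_idealOfVarsIn_pow_iff_le_weightedOrder :
    f ∈ idealOfVarsIn R C ^ n ↔
      n ≤ (f : MvPowerSeries σ R).weightedOrder (Set.indicator C 1) :=
  mem_idealOfVarsIn_pow_iff.trans le_weightedOrder_coe_iff.symm

theorem mem_idealOfVarsIn_iff_weightedOrder_ne_zero :
    f ∈ idealOfVarsIn R C ↔
      (f : MvPowerSeries σ R).weightedOrder (Set.indicator C 1) ≠ 0 := by
  rw [← pow_one (idealOfVarsIn R C), mem_idealOfVarsIn_pow_iff_le_weightedOrder, Nat.cast_one,
    Order.one_le_iff_ne_zero]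

theorem isPrime_idealOfVarsIn [NoZeroDivisors R] [Nontrivial R] (C : Finset σ) :
    (idealOfVarsIn R C).IsPrime := by
  refine Ideal.isPrime_iff.2 ⟨fun htop => ?_, fun {f g} hfg => ?_⟩
  · have hone := mem_idealOfVarsIn_iff.1 ((Ideal.eq_top_iff_one _).1 htop) 0 (by simp)
    simp at hone
  · simp only [mem_idealOfVarsIn_iff_weightedOrder_ne_zero, coe_mul,
      MvPowerSeries.weightedOrder_mul] at hfg ⊢
    contrapose! hfg
    rw [hfg.1, hfg.2, add_zero]

theorem mem_idealOfVarsIn_pow_of_mul_mem [NoZeroDivisors R] {s : MvPolynomial σ R}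
    (hs : s ∉ idealOfVarsIn R C) (hsf : s * f ∈ idealOfVarsIn R C ^ n) :
    f ∈ idealOfVarsIn R C ^ n := by
  rw [mem_idealOfVarsIn_iff_weightedOrder_ne_zero, not_not] at hs
  rwa [mem_idealOfVarsIn_pow_iff_le_weightedOrder, coe_mul, MvPowerSeries.weightedOrder_mul, hs,
    zero_add, ← mem_idealOfVarsIn_pow_iff_le_weightedOrder] at hsf

theorem X_mem_idealOfVarsIn_iff [Nontrivial R] {v : σ} :
    X v ∈ idealOfVarsIn R C ↔ v ∈ C := by
  classical
  simp [mem_idealOfVarsIn_iff, support_X, Finsupp.single_apply, Nat.one_le_iff_ne_zero]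

end VariableIdeals

section SquarefreeMonomials

variable {V R : Type*} [CommSemiring R]

/-- The indicator function of `s`, as the exponent vector of the squarefree monomial
`∏ v ∈ s, X v`. -/
noncomputable def charVec (s : Finset V) : V →₀ ℕ :=
  Finsupp.indicator s fun _ _ => 1

theorem prod_X_eq_monomial_charVec (s : Finset V) :
    ∏ v ∈ s, (X v : MvPolynomial V R) = monomial (charVec s) 1 := by
  rw [charVec, Finsupp.indicator_eq_sum_single, monomial_sum_one]
  rfl

theorem monomial_mem_of_le {J : Ideal (MvPolynomial V R)} {d m : V →₀ ℕ} (a : R)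
    (hd : monomial d 1 ∈ J) (hdm : d ≤ m) : monomial m a ∈ J := by
  obtain ⟨d', rfl⟩ := exists_add_of_le hdm
  rw [← one_mul a, ← monomial_mul]
  exact J.mul_mem_right _ hd

theorem charVec_apply [DecidableEq V] (s : Finset V) (v : V) :
    charVec s v = if v ∈ s then 1 else 0 := by
  simp [charVec, Finsupp.indicator_apply]

theorem charVec_le_iff {s : Finset V} {m : V →₀ ℕ} : charVec s ≤ m ↔ s ⊆ m.support := by
  classical
  simp only [Finsupp.le_def, charVec_apply, Finset.subset_iff, Finsupp.mem_support_iff]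
  exact forall_congr' fun v => by split_ifs with hv <;> simp [hv, Nat.one_le_iff_ne_zero]

theorem sum_charVec [DecidableEq V] (C s : Finset V) : ∑ v ∈ C, charVec s v = (C ∩ s).card := by
  simp only [charVec_apply, Finset.sum_boole, Finset.filter_mem_eq_inter, Nat.cast_id]

end SquarefreeMonomials

section VertexCovers

variable {V : Type*} {E : Finset (Finset V)}

/-- A (finite) vertex cover of the hypergraph `E`: a set of vertices meeting every edge. The minimal
ones index the associated primes of the edge ideal. -/
def IsVertexCover (E : Finset (Finset V)) (C : Finset V) : Prop :=
  ∀ e ∈ E, ∃ v ∈ e, v ∈ C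

theorem IsVertexCover.exists_minimal_le {C : Finset V} (hC : IsVertexCover E C) :
    ∃ D ⊆ C, Minimal (IsVertexCover E) D :=
  exists_minimal_le_of_wellFoundedLT (IsVertexCover E) C hC

theorem exists_mem_inter_eq_singleton_of_minimal [DecidableEq V] {C : Finset V}
    (hC : Minimal (IsVertexCover E) C) {v : V} (hv : v ∈ C) : ∃ e ∈ E, e ∩ C = {v} := by
  have hnot : ¬ IsVertexCover E (C.erase v) := fun h =>
    Finset.notMem_erase v C (hC.le_of_le h (Finset.erase_subset v C) hv)
  simp only [IsVertexCover, not_forall, not_exists, not_and, Finset.mem_erase] at hnot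
  obtain ⟨e, he, hev⟩ := hnot
  obtain ⟨w, hwe, hwC⟩ := hC.prop e he
  exact ⟨e, he, by grind⟩

/-- Adding to `S` the vertices outside the support of `m` produces a vertex cover of the same
weight. -/
theorem le_sum_of_forall_subset_support {n : ℕ} {m : V →₀ ℕ}
    (hm : ∀ C, IsVertexCover E C → n ≤ ∑ v ∈ C, m v) {S : Finset V}
    (hS : ∀ e ∈ E, e ⊆ m.support → ∃ v ∈ e, v ∈ S) : n ≤ ∑ v ∈ S, m v := by
  classical
  have hcover : IsVertexCover E (S ∪ (E.biUnion id).filter (· ∉ m.support)) := by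
    intro e he
    by_cases hem : e ⊆ m.support
    · obtain ⟨v, hv, hvS⟩ := hS e he hem
      exact ⟨v, hv, Finset.mem_union_left _ hvS⟩
    · obtain ⟨v, hv, hvm⟩ := Finset.not_subset.1 hem
      exact ⟨v, hv, Finset.mem_union_right _ (Finset.mem_filter.2
        ⟨Finset.mem_biUnion.2 ⟨e, he, hv⟩, hvm⟩)⟩
  refine (hm _ hcover).trans_eq (Finset.sum_subset Finset.subset_union_left ?_).symm
  intro v hv hvS
  exact Finsupp.notMem_support_iff.1
    (Finset.mem_filter.1 ((Finset.mem_union.1 hv).resolve_left hvS)).2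

theorem exists_mem_subset_support {m : V →₀ ℕ}
    (hm : ∀ C, IsVertexCover E C → 1 ≤ ∑ v ∈ C, m v) : ∃ e ∈ E, e ⊆ m.support := by
  by_contra! hno
  have hle := le_sum_of_forall_subset_support hm (S := ∅) fun e he hem => absurd hem (hno e he)
  simp at hle

end VertexCovers

section EdgeIdeal

variable {V k : Type*} [DecidableEq V] [CommRing k] {E : Finset (Finset V)}

theorem monomial_charVec_mem_edgeIdeal {e : Finset V} (he : e ∈ E) :
    monomial (charVec e) 1 ∈ edgeIdeal k E := by
  rw [← prod_X_eq_monomial_charVec]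
  exact Ideal.subset_span ⟨e, he, rfl⟩

theorem edgeIdeal_le_idealOfVarsIn {C : Finset V} (hC : IsVertexCover E C) :
    edgeIdeal k E ≤ idealOfVarsIn k C := by
  rw [edgeIdeal, Ideal.span_le]
  rintro _ ⟨e, he, rfl⟩
  obtain ⟨v, hve, hvC⟩ := hC e he
  exact Ideal.mem_of_dvd _ (Finset.dvd_prod_of_mem _ hve) (Ideal.subset_span ⟨v, hvC, rfl⟩)

theorem exists_isVertexCover_idealOfVarsIn_le {p : Ideal (MvPolynomial V k)} (hp : p.IsPrime)
    (hle : edgeIdeal k E ≤ p) : ∃ C, IsVertexCover E C ∧ idealOfVarsIn k C ≤ p := by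
  classical
  refine ⟨(E.biUnion id).filter (X · ∈ p), fun e he => ?_, ?_⟩
  · obtain ⟨v, hve, hvp⟩ := hp.prod_mem_iff.1 (hle (Ideal.subset_span ⟨e, he, rfl⟩))
    exact ⟨v, hve, Finset.mem_filter.2 ⟨Finset.mem_biUnion.2 ⟨e, he, hve⟩, hvp⟩⟩
  · rw [idealOfVarsIn, Ideal.span_le]
    rintro _ ⟨v, hv, rfl⟩
    exact (Finset.mem_filter.1 hv).2

theorem edgeIdeal_eq_iInf_idealOfVarsIn :
    edgeIdeal k E = ⨅ C : {C // IsVertexCover E C}, idealOfVarsIn k (C : Finset V) := by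
  refine le_antisymm (le_iInf fun C => edgeIdeal_le_idealOfVarsIn C.2) fun f hf => ?_
  simp only [Ideal.mem_iInf, mem_idealOfVarsIn_iff, Subtype.forall] at hf
  rw [f.as_sum]
  refine Ideal.sum_mem _ fun m hm => ?_
  obtain ⟨e, he, hem⟩ := exists_mem_subset_support fun C hC => hf C hC m hm
  exact monomial_mem_of_le _ (monomial_charVec_mem_edgeIdeal he) (charVec_le_iff.2 hem)

variable [IsDomain k]

variable (k E) in
theorem isRadical_edgeIdeal : (edgeIdeal k E).IsRadical := by
  rw [edgeIdeal_eq_iInf_idealOfVarsIn]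
  exact Ideal.isRadical_iInf _ fun C => (isPrime_idealOfVarsIn C.1).isRadical

theorem idealOfVarsIn_eq_colon {C : Finset V} (hC : Minimal (IsVertexCover E) C) :
    idealOfVarsIn k C =
      (edgeIdeal k E).colon {∏ v ∈ E.biUnion id \ C, (X v : MvPolynomial V k)} := by
  have hprime := isPrime_idealOfVarsIn (R := k) C
  apply le_antisymm
  · rw [idealOfVarsIn, Ideal.span_le]
    rintro _ ⟨v, hv, rfl⟩
    obtain ⟨e, he, heC⟩ := exists_mem_inter_eq_singleton_of_minimal hC hv
    have hsub : e ⊆ insert v (E.biUnion id \ C) := fun w hw => by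
      by_cases hwC : w ∈ C
      · have hwv : w ∈ e ∩ C := Finset.mem_inter.2 ⟨hw, hwC⟩
        rw [heC, Finset.mem_singleton] at hwv
        exact hwv ▸ Finset.mem_insert_self _ _
      · exact Finset.mem_insert_of_mem
          (Finset.mem_sdiff.2 ⟨Finset.mem_biUnion.2 ⟨e, he, hw⟩, hwC⟩)
    rw [SetLike.mem_coe, Submodule.mem_colon_singleton, smul_eq_mul,
      ← Finset.prod_insert fun h => (Finset.mem_sdiff.1 h).2 hv]
    exact Ideal.mem_of_dvd _ (Finset.prod_dvd_prod_of_subset _ _ _ hsub)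
      (Ideal.subset_span ⟨e, he, rfl⟩)
  · intro g hg
    rw [Submodule.mem_colon_singleton, smul_eq_mul] at hg
    refine (hprime.mem_or_mem (edgeIdeal_le_idealOfVarsIn hC.prop hg)).resolve_right fun h => ?_
    obtain ⟨v, hv, hvC⟩ := hprime.prod_mem_iff.1 h
    exact (Finset.mem_sdiff.1 hv).2 (X_mem_idealOfVarsIn_iff.1 hvC)

theorem idealOfVarsIn_mem_associatedPrimes {C : Finset V} (hC : Minimal (IsVertexCover E) C) :
    idealOfVarsIn k C ∈ associatedPrimes _ (MvPolynomial V k ⧸ edgeIdeal k E) :=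
  (mem_associatedPrimes_quotient_iff (isRadical_edgeIdeal k E)).2
    ⟨isPrime_idealOfVarsIn C, _, idealOfVarsIn_eq_colon hC⟩

theorem mem_symbolicPower_edgeIdeal_iff {n : ℕ} {f : MvPolynomial V k} :
    f ∈ symbolicPower (edgeIdeal k E) n ↔
      ∀ m ∈ f.support, ∀ C, IsVertexCover E C → n ≤ ∑ v ∈ C, m v := by
  constructor
  · intro hf m hm C hC
    obtain ⟨D, hDC, hD⟩ := hC.exists_minimal_le
    obtain ⟨s, hs, hsf⟩ := mem_symbolicPower_iff.1 hf _ (idealOfVarsIn_mem_associatedPrimes hD)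
    have hfD : f ∈ idealOfVarsIn k D ^ n := mem_idealOfVarsIn_pow_of_mul_mem hs
      (Ideal.pow_right_mono (edgeIdeal_le_idealOfVarsIn hD.prop) n hsf)
    exact (mem_idealOfVarsIn_pow_iff.1 hfD m hm).trans (Finset.sum_le_sum_of_subset hDC)
  · intro h
    have hradical := isRadical_edgeIdeal k E
    refine mem_symbolicPower_of_forall_mem_pow hradical fun p hp => ?_
    obtain ⟨hprime, s, rfl⟩ := (mem_associatedPrimes_quotient_iff hradical).1 hp
    obtain ⟨C, hC, hCp⟩ := exists_isVertexCover_idealOfVarsIn_le hprime Ideal.le_colon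
    exact Ideal.pow_right_mono hCp n (mem_idealOfVarsIn_pow_iff.2 fun m hm => h m hm C hC)

end EdgeIdeal

section StrongColorings

variable {V : Type*} {E : Finset (Finset V)}

theorem exists_coloring_injOn [DecidableEq V] {ι : Type*} {P : ι → Finset V}
    (hcover : ∀ v, ∃ i, v ∈ P i) (hpartite : ∀ e ∈ E, ∀ i, (e ∩ P i).card ≤ 1) :
    ∃ c : V → ι, ∀ e ∈ E, Set.InjOn c e := by
  choose c hc using hcover
  refine ⟨c, fun e he x hx y hy hxy => Finset.card_le_one.1 (hpartite e he (c x)) x ?_ y ?_⟩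
  · exact Finset.mem_inter.2 ⟨hx, hc x⟩
  · exact Finset.mem_inter.2 ⟨hy, hxy ▸ hc y⟩

theorem color_eq_or_eq_or_eq {c : V → Fin 3} {e : Finset V} (he : Set.InjOn c e) {x y z : V}
    (hx : x ∈ e) (hy : y ∈ e) (hz : z ∈ e) (hxy : x ≠ y) (hxz : x ≠ z) (hyz : y ≠ z) (w : V) :
    c w = c x ∨ c w = c y ∨ c w = c z := by
  have hcxy : c x ≠ c y := he.ne hx hy hxy
  have hcxz : c x ≠ c z := he.ne hx hz hxz
  have hcyz : c y ≠ c z := he.ne hy hz hyz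
  lia

/-- If any two edges met twice in `T`, an edge `e` would have three vertices `x, y, z` in `T`,
say with `y, z ∈ g`, `x ∉ g` and `y ∉ h`; a common vertex of `g` and `h` other than `z` then has a
color different from those of `x, y, z`. -/
theorem exists_unique_mem_inter {c : V → Fin 3} (hc : ∀ e ∈ E, Set.InjOn c e)
    (hE : E.Nonempty) {T : Set V} (havoid : ∀ x ∈ T, ∃ e ∈ E, x ∉ e)
    (hmeet : ∀ e ∈ E, ∀ f ∈ E, ∃ x ∈ T, x ∈ e ∧ x ∈ f) :
    ∃ e ∈ E, ∃ f ∈ E, ∃! x, x ∈ T ∧ x ∈ e ∧ x ∈ f := by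
  by_contra! hunique
  have exists_ne : ∀ e ∈ E, ∀ f ∈ E, ∀ x, ∃ y ∈ T, y ∈ e ∧ y ∈ f ∧ y ≠ x := by
    intro e he f hf x
    by_contra! hx
    obtain ⟨y, hyT, hye, hyf⟩ := hmeet e he f hf
    obtain rfl := hx y hyT hye hyf
    exact hunique e he f hf ⟨y, ⟨hyT, hye, hyf⟩, fun z hz => hx z hz.1 hz.2.1 hz.2.2⟩
  obtain ⟨e, he⟩ := hE
  obtain ⟨x, hxT, hxe, -⟩ := hmeet e he e he
  obtain ⟨g, hg, hxg⟩ := havoid x hxT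
  obtain ⟨y, hyT, hye, hyg⟩ := hmeet e he g hg
  obtain ⟨h, hh, hyh⟩ := havoid y hyT
  obtain ⟨z, -, hze, hzg, hzy⟩ := exists_ne e he g hg y
  have hxy : x ≠ y := fun hxy => hxg (hxy ▸ hyg)
  have hxz : x ≠ z := fun hxz => hxg (hxz ▸ hzg)
  have hcolor := color_eq_or_eq_or_eq (hc e he) hxe hye hze hxy hxz hzy.symm
  have hsubset : ∀ v ∈ e, v = x ∨ v = y ∨ v = z := fun v hv =>
    (hcolor v).imp (hc e he hv hxe) (Or.imp (hc e he hv hye) (hc e he hv hze))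
  have hxh : x ∈ h := by
    obtain ⟨v, -, hve, hvh, hvz⟩ := exists_ne e he h hh z
    obtain rfl | rfl | rfl := hsubset v hve
    exacts [hvh, absurd hvh hyh, absurd rfl hvz]
  obtain ⟨w, -, hwg, hwh, hwz⟩ := exists_ne g hg h hh z
  rcases hcolor w with hwx | hwy | hwz'
  · exact hxg (hc h hh hwh hxh hwx ▸ hwg)
  · exact hyh (hc g hg hwg hyg hwy ▸ hwh)
  · exact hwz (hc g hg hwg hzg hwz')

variable [DecidableEq V]

theorem inter_eq_singleton_of_triangle {c : V → Fin 3} {e f g : Finset V} (he : Set.InjOn c e)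
    (hf : Set.InjOn c f) (hg : Set.InjOn c g) {x y z : V} (hx : x ∈ e ∩ f) (hy : y ∈ e ∩ g)
    (hz : z ∈ f ∩ g) (hyf : y ∉ f) (hze : z ∉ e) : e ∩ f = {x} := by
  simp only [Finset.mem_inter] at hx hy hz
  have hxy : c x ≠ c y := fun h => hyf (he hx.1 hy.1 h ▸ hx.2)
  have hxz : c x ≠ c z := fun h => hze (hf hx.2 hz.1 h ▸ hx.1)
  have hyz : c y ≠ c z := fun h => hyf (hg hy.2 hz.2 h ▸ hz.1)
  refine Finset.eq_singleton_iff_unique_mem.2 ⟨Finset.mem_inter.2 hx, fun w hw => ?_⟩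
  obtain ⟨hwe, hwf⟩ := Finset.mem_inter.1 hw
  have hwy : c w ≠ c y := fun h => hyf (he hwe hy.1 h ▸ hwf)
  have hwz : c w ≠ c z := fun h => hze (hf hwf hz.1 h ▸ hwe)
  exact he hwe hx.1 (by lia)

theorem badTriple_of_triangle {c : V → Fin 3} (hc : ∀ e ∈ E, Set.InjOn c e) {e f g : Finset V}
    (he : e ∈ E) (hf : f ∈ E) (hg : g ∈ E) {x y z : V} (hx : x ∈ e ∩ f) (hy : y ∈ e ∩ g)
    (hz : z ∈ f ∩ g) (hxg : x ∉ g) (hyf : y ∉ f) (hze : z ∉ e) : BadTriple E e f g := by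
  have hef : e ∩ f = {x} := inter_eq_singleton_of_triangle (hc e he) (hc f hf) (hc g hg)
    hx hy hz hyf hze
  have hfg : f ∩ g = {z} := inter_eq_singleton_of_triangle (hc f hf) (hc g hg) (hc e he)
    hz (Finset.inter_comm e f ▸ hx) (Finset.inter_comm e g ▸ hy) hxg hyf
  have heg : e ∩ g = {y} := inter_eq_singleton_of_triangle (hc e he) (hc g hg) (hc f hf)
    hy hx (Finset.inter_comm f g ▸ hz) hxg hze
  simp only [Finset.mem_inter] at hx hy hz
  simp only [BadTriple, hef, hfg, heg, Finset.card_singleton, ne_eq, Finset.singleton_inj]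
  exact ⟨he, hf, hg, by grind⟩

theorem exists_badTriple {c : V → Fin 3} (hc : ∀ e ∈ E, Set.InjOn c e) (hE : E.Nonempty)
    {T : Set V} (havoid : ∀ x ∈ T, ∃ e ∈ E, x ∉ e)
    (hmeet : ∀ e ∈ E, ∀ f ∈ E, ∃ x ∈ T, x ∈ e ∧ x ∈ f) : ∃ e f g, BadTriple E e f g := by
  obtain ⟨e, he, f, hf, x, ⟨hxT, hxe, hxf⟩, hunique⟩ := exists_unique_mem_inter hc hE havoid hmeet
  obtain ⟨g, hg, hxg⟩ := havoid x hxT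
  obtain ⟨y, hyT, hye, hyg⟩ := hmeet e he g hg
  obtain ⟨z, hzT, hzf, hzg⟩ := hmeet f hf g hg
  refine ⟨e, f, g, badTriple_of_triangle hc he hf hg (Finset.mem_inter.2 ⟨hxe, hxf⟩)
    (Finset.mem_inter.2 ⟨hye, hyg⟩) (Finset.mem_inter.2 ⟨hzf, hzg⟩) hxg ?_ ?_⟩
  · exact fun hyf => hxg (hunique y ⟨hyT, hye, hyf⟩ ▸ hyg)
  · exact fun hze => hxg (hunique z ⟨hzT, hze, hzf⟩ ▸ hzg)

end StrongColorings

section BadTriples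

variable {V : Type*} [DecidableEq V] {E : Finset (Finset V)}

theorem BadTriple.mono {F : Finset (Finset V)} (hEF : E ⊆ F) {e f g : Finset V}
    (h : BadTriple E e f g) : BadTriple F e f g :=
  ⟨hEF h.1, hEF h.2.1, hEF h.2.2.1, h.2.2.2⟩

theorem BadTriple.notMem_of_mem {e f g : Finset V} (h : BadTriple E e f g) {x : V}
    (hxe : x ∈ e) (hxf : x ∈ f) : x ∉ g := by
  intro hxg
  obtain ⟨-, -, -, -, -, -, hef, hfg, -, hne, -, -⟩ := h
  have eq_singleton {s : Finset V} (hs : s.card = 1) (hx : x ∈ s) : s = {x} :=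
    (Finset.eq_of_subset_of_card_le (Finset.singleton_subset_iff.2 hx) hs.le).symm
  exact hne ((eq_singleton hef (Finset.mem_inter.2 ⟨hxe, hxf⟩)).trans
    (eq_singleton hfg (Finset.mem_inter.2 ⟨hxf, hxg⟩)).symm)

theorem BadTriple.two_le_card_inter {e f g C : Finset V} (h : BadTriple E e f g)
    (hC : IsVertexCover E C) : 2 ≤ (C ∩ (e ∪ f ∪ g)).card := by
  obtain ⟨u, hue, huC⟩ := hC e h.1
  obtain ⟨v, hvf, hvC⟩ := hC f h.2.1
  obtain ⟨w, hwg, hwC⟩ := hC g h.2.2.1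
  by_contra! hlt
  have heq := Finset.card_le_one.1 (Nat.le_of_lt_succ hlt)
  obtain rfl : u = v := heq u (by simp [hue, huC]) v (by simp [hvf, hvC])
  obtain rfl : u = w := heq u (by simp [hue, huC]) w (by simp [hwg, hwC])
  exact h.notMem_of_mem hue hvf hwg

theorem exists_charVec_add_le_or_exists_badTriple {c : V → Fin 3}
    (hc : ∀ e ∈ E, Set.InjOn c e) {m : V →₀ ℕ}
    (hm : ∀ C, IsVertexCover E C → 2 ≤ ∑ v ∈ C, m v) :
    (∃ e ∈ E, ∃ f ∈ E, charVec e + charVec f ≤ m) ∨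
      ∃ e f g, BadTriple E e f g ∧ e ∪ f ∪ g ⊆ m.support := by
  rw [or_iff_not_imp_left]
  intro hsq
  set F := E.filter (· ⊆ m.support)
  have hF : F.Nonempty := by
    obtain ⟨e, he⟩ := exists_mem_subset_support fun C hC => one_le_two.trans (hm C hC)
    exact ⟨e, Finset.mem_filter.2 he⟩
  have havoid : ∀ x ∈ {x | m x = 1}, ∃ e ∈ F, x ∉ e := by
    intro x hx
    rw [Set.mem_ofPred_eq] at hx
    by_contra! hno
    have hle := le_sum_of_forall_subset_support hm (S := {x}) fun e he hem =>
      ⟨x, hno e (Finset.mem_filter.2 ⟨he, hem⟩), Finset.mem_singleton_self x⟩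
    rw [Finset.sum_singleton, hx] at hle
    exact absurd hle (by decide)
  have hmeet : ∀ e ∈ F, ∀ f ∈ F, ∃ x ∈ {x | m x = 1}, x ∈ e ∧ x ∈ f := by
    intro e he f hf
    obtain ⟨heE, hem⟩ := Finset.mem_filter.1 he
    obtain ⟨hfE, hfm⟩ := Finset.mem_filter.1 hf
    by_contra! hno
    refine hsq ⟨e, heE, f, hfE, fun v => ?_⟩
    have hve := @hem v
    have hvf := @hfm v
    have hv := hno v
    rw [Finsupp.mem_support_iff] at hve hvf
    rw [Set.mem_ofPred_eq] at hv
    rw [Finsupp.add_apply, charVec_apply, charVec_apply]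
    split_ifs <;> grind
  obtain ⟨e, f, g, hbad⟩ :=
    exists_badTriple (fun e he => hc e (Finset.mem_of_mem_filter e he)) hF havoid hmeet
  exact ⟨e, f, g, hbad.mono (Finset.filter_subset _ _), Finset.union_subset
    (Finset.union_subset (Finset.mem_filter.1 hbad.1).2 (Finset.mem_filter.1 hbad.2.1).2)
    (Finset.mem_filter.1 hbad.2.2.1).2⟩

end BadTriples

section SecondSymbolicPower

variable {k V : Type*} [CommRing k] [DecidableEq V] {E : Finset (Finset V)}

theorem monomial_mem_edgeIdeal_sq {e f : Finset V} (he : e ∈ E) (hf : f ∈ E) {m : V →₀ ℕ} (a : k)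
    (hm : charVec e + charVec f ≤ m) : monomial m a ∈ edgeIdeal k E ^ 2 := by
  refine monomial_mem_of_le a ?_ hm
  rw [← one_mul (1 : k), ← monomial_mul, pow_two]
  exact Ideal.mul_mem_mul (monomial_charVec_mem_edgeIdeal he) (monomial_charVec_mem_edgeIdeal hf)

theorem BadTriple.prod_X_mem_symbolicPower [IsDomain k] {e f g : Finset V}
    (h : BadTriple E e f g) :
    ∏ v ∈ e ∪ f ∪ g, (X v : MvPolynomial V k) ∈ symbolicPower (edgeIdeal k E) 2 := by
  refine mem_symbolicPower_edgeIdeal_iff.2 fun m hm C hC => ?_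
  rw [prod_X_eq_monomial_charVec] at hm
  obtain rfl := Finset.mem_singleton.1 (support_monomial_subset hm)
  rw [sum_charVec]
  exact h.two_le_card_inter hC

end SecondSymbolicPower

theorem stmt9_general {k V : Type*} [CommRing k] [IsDomain k] [DecidableEq V]
    (E : Finset (Finset V)) (c : V → Fin 3) (hc : ∀ e ∈ E, Set.InjOn c e) :
    symbolicPower (edgeIdeal k E) 2 =
      (edgeIdeal k E) ^ 2 ⊔
        Ideal.span { m : MvPolynomial V k | ∃ e₁ e₂ e₃ : Finset V,
          BadTriple E e₁ e₂ e₃ ∧ m = ∏ x ∈ e₁ ∪ e₂ ∪ e₃, X x } := by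
  apply le_antisymm
  · intro p hp
    rw [p.as_sum]
    refine Ideal.sum_mem _ fun m hm => ?_
    obtain ⟨e, he, f, hf, hle⟩ | ⟨e, f, g, hbad, hsub⟩ :=
      exists_charVec_add_le_or_exists_badTriple hc (mem_symbolicPower_edgeIdeal_iff.1 hp m hm)
    · exact Ideal.mem_sup_left (monomial_mem_edgeIdeal_sq he hf _ hle)
    · refine Ideal.mem_sup_right (monomial_mem_of_le _ ?_ (charVec_le_iff.2 hsub))
      exact Ideal.subset_span ⟨e, f, g, hbad, (prod_X_eq_monomial_charVec _).symm⟩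
  · refine sup_le (pow_le_symbolicPower _ 2) (Ideal.span_le.2 ?_)
    rintro _ ⟨e, f, g, hbad, rfl⟩
    exact hbad.prod_X_mem_symbolicPower

/-- the second symbolic power of the edge ideal of a 3-uniform
3-partite hypergraph equals the second ordinary power plus the ideal generated by
the products of vertices of the bad subhypergraphs of length 3. -/
theorem stmt9 {k V : Type*} [Field k] [Fintype V] [DecidableEq V]
    (E : Finset (Finset V))
    (huniform : ∀ e ∈ E, e.card = 3)
    (Xp : Fin 3 → Finset V)
    (hdisj : Pairwise fun i j => Disjoint (Xp i) (Xp j))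
    (hcover : ∀ v : V, ∃ i, v ∈ Xp i)
    (hpartite : ∀ e ∈ E, ∀ i, (e ∩ Xp i).card = 1) :
    symbolicPower (edgeIdeal k E) 2 =
      (edgeIdeal k E) ^ 2 ⊔
        Ideal.span { m : MvPolynomial V k | ∃ e₁ e₂ e₃ : Finset V,
          BadTriple E e₁ e₂ e₃ ∧ m = ∏ x ∈ e₁ ∪ e₂ ∪ e₃, X x } := by
  obtain ⟨c, hc⟩ := exists_coloring_injOn hcover fun e he i => (hpartite e he i).le
  exact stmt9_general E c hc
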